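/- arXiv:math/0407440 — 2 statements merged into one kernel-verified Lean document; each statement's English description precedes it below -/
import Mathlib

section
/- Suppose κ is the successor of an infinite cardinal. Then U_κ ≥ d̄_κ. -/
open Cardinal Set

namespace PaperFormal

noncomputable section

/-- The least (small) cardinality of a family `F : Set X` satisfying `P`. -/
def leastCard {X : Type 1} (P : Set X → Prop) : Cardinal.{0} :=
  sInf {c : Cardinal.{0} | ∃ F : Set X, P F ∧ Cardinal.lift.{1} c = #F}

/-- The collection of (codings of) functions from `κ` to `κ`. -/
def funOn (κ : Cardinal.{0}) : Set (Ordinal.{0} → Ordinal.{0}) :=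
  {f | ∀ α < κ.ord, f α < κ.ord}

/-- The unequality number `U_κ`. -/
def uneq (κ : Cardinal.{0}) : Cardinal.{0} :=
  leastCard fun F : Set (Ordinal.{0} → Ordinal.{0}) => F ⊆ funOn κ ∧
    ∀ g ∈ funOn κ, ∃ f ∈ F, {α | α < κ.ord ∧ f α = g α} = ∅

/-- The dominating number `d_κ`. -/
def domNum (κ : Cardinal.{0}) : Cardinal.{0} :=
  leastCard fun F : Set (Ordinal.{0} → Ordinal.{0}) => F ⊆ funOn κ ∧
    ∀ g ∈ funOn κ, ∃ f ∈ F, ∀ α < κ.ord, g α < f α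

/-- The number `d̄_κ`. -/
def domBar (κ : Cardinal.{0}) : Cardinal.{0} :=
  leastCard fun X : Set (Ordinal.{0} → Ordinal.{0}) => X ⊆ funOn κ ∧
    ∀ g ∈ funOn κ, ∃ x ⊆ X, x.Nonempty ∧ #x < Cardinal.lift.{1} κ ∧
      ∀ α < κ.ord, g α < sSup {o | ∃ f ∈ x, f α = o}

/-- The generalized Cantor space `^ρ2`, with points coded as subsets of `Iio ρ.ord`. -/
def cantor (ρ : Cardinal.{0}) : Set (Set Ordinal.{0}) := {x | x ⊆ Iio ρ.ord}

/-- A forcing condition: a pair `(a, t)` with `t ⊆ a ⊆ Iio ρ.ord` and `|a| < ν`. -/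
def IsCond (ν ρ : Cardinal.{0}) (a t : Set Ordinal.{0}) : Prop :=
  a ⊆ Iio ρ.ord ∧ t ⊆ a ∧ #a < Cardinal.lift.{1} ν

/-- The basic open set determined by a condition. -/
def basicOpen (ρ : Cardinal.{0}) (a t : Set Ordinal.{0}) : Set (Set Ordinal.{0}) :=
  {x | x ⊆ Iio ρ.ord ∧ x ∩ a = t}

/-- Dense open subsets of `^ρ2` (for the `<ν`-support topology). -/
def DenseOpen (ν ρ : Cardinal.{0}) (D : Set (Set Ordinal.{0})) : Prop :=
  D ⊆ cantor ρ ∧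
  (∀ x ∈ D, ∃ a t, IsCond ν ρ a t ∧ x ∈ basicOpen ρ a t ∧ basicOpen ρ a t ⊆ D) ∧
  (∀ a t, IsCond ν ρ a t → (basicOpen ρ a t ∩ D).Nonempty)

/-- Members of `M_{ν,ρ}`. -/
def Meager (ν ρ : Cardinal.{0}) (W : Set (Set Ordinal.{0})) : Prop :=
  W ⊆ cantor ρ ∧ ∃ X : Set (Set (Set Ordinal.{0})), X.Nonempty ∧
    #X ≤ Cardinal.lift.{1} ν ∧ (∀ D ∈ X, DenseOpen ν ρ D) ∧ W ∩ ⋂₀ X = ∅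

/-- The covering number for category `cov(M_{ν,ρ})`. -/
def covM (ν ρ : Cardinal.{0}) : Cardinal.{0} :=
  leastCard fun Y : Set (Set (Set Ordinal.{0})) =>
    (∀ W ∈ Y, Meager ν ρ W) ∧ ⋃₀ Y = cantor ρ

/-- A (`κ`-complete) ideal on `κ`. -/
structure IdealK (κ : Cardinal.{0}) where
  mem : Set (Set Ordinal.{0})
  subset_iio : ∀ A ∈ mem, A ⊆ Iio κ.ord
  singleton_mem : ∀ α < κ.ord, {α} ∈ mem
  subset_mem : ∀ A ∈ mem, ∀ B ⊆ A, B ∈ mem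
  sUnion_mem : ∀ X : Set (Set Ordinal.{0}), X ⊆ mem → #X < Cardinal.lift.{1} κ → ⋃₀ X ∈ mem
  ne_top : Iio κ.ord ∉ mem

/-- `J⁺`, the sets (⊆ κ) not in the ideal. -/
def IdealK.plus {κ : Cardinal.{0}} (J : IdealK κ) : Set (Set Ordinal.{0}) :=
  {A | A ⊆ Iio κ.ord ∧ A ∉ J.mem}

/-- `cof(J)`. -/
def IdealK.cof {κ : Cardinal.{0}} (J : IdealK κ) : Cardinal.{0} :=
  leastCard fun X : Set (Set Ordinal.{0}) =>
    X ⊆ J.mem ∧ ∀ A, A ∈ J.mem ↔ ∃ B ∈ X, A ⊆ B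

/-- `cof̄(J)`. -/
def IdealK.cofBar {κ : Cardinal.{0}} (J : IdealK κ) : Cardinal.{0} :=
  leastCard fun X : Set (Set Ordinal.{0}) =>
    X ⊆ J.mem ∧ ∀ A ∈ J.mem, ∃ x ⊆ X, #x < Cardinal.lift.{1} κ ∧ A ⊆ ⋃₀ x

/-- `non_κ(P)`. -/
def nonK (κ : Cardinal.{0}) (P : IdealK κ → Prop) : Cardinal.{0} :=
  sInf {c | ∃ J : IdealK κ, J.cof = c ∧ ¬ P J}

/-- `non̄_κ(P)`. -/
def nonBarK (κ : Cardinal.{0}) (P : IdealK κ → Prop) : Cardinal.{0} :=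
  sInf {c | ∃ J : IdealK κ, J.cofBar = c ∧ ¬ P J}

/-- Weak `P`-point. -/
def WeakPPoint {κ : Cardinal.{0}} (J : IdealK κ) : Prop :=
  ∀ A ∈ J.plus, ∀ f : Ordinal.{0} → Ordinal.{0},
    (∀ α ∈ A, f α < κ.ord) → (∀ β, {α ∈ A | f α = β} ∈ J.mem) →
    ∃ B ∈ J.plus, B ⊆ A ∧ ∀ β, #{α ∈ B | f α = β} < Cardinal.lift.{1} κ

/-- Weak `Q`-point. -/
def WeakQPoint {κ : Cardinal.{0}} (J : IdealK κ) : Prop :=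
  ∀ A ∈ J.plus, ∀ g ∈ funOn κ,
    ∃ B ∈ J.plus, B ⊆ A ∧ ∀ α ∈ B, ∀ β ∈ B, α < β → g α < β

/-- Weakly selective ideal. -/
def WeaklySelective {κ : Cardinal.{0}} (J : IdealK κ) : Prop :=
  WeakPPoint J ∧ WeakQPoint J

/-- Weak semi-`Q`-point. -/
def WeakSemiQPoint {κ : Cardinal.{0}} (J : IdealK κ) : Prop :=
  ∀ A ∈ J.plus, ∀ f : Ordinal.{0} → Ordinal.{0},
    (∀ α ∈ A, f α < κ.ord) →
    (∀ β, #{α ∈ A | f α = β} < Cardinal.lift.{1} κ) →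
    ∃ C ∈ J.plus, C ⊆ A ∧ ∀ β < κ.ord, #{α ∈ C | f α = β} ≤ Cardinal.lift.{1} β.card

/-- `P_κ(λ)`, coded as the small subsets of `Iio λ.ord`. -/
def smallSet (κ lam : Cardinal.{0}) : Set (Set Ordinal.{0}) :=
  {a | a ⊆ Iio lam.ord ∧ #a < Cardinal.lift.{1} κ}

/-- The ideal `I_{κ,λ}` of noncofinal subsets of `P_κ(λ)`. -/
def Ikl (κ lam : Cardinal.{0}) : Set (Set (Set Ordinal.{0})) :=
  {A | A ⊆ smallSet κ lam ∧ ∃ a ∈ smallSet κ lam, ∀ b ∈ A, ¬ a ⊆ b}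

/-- A (`κ`-complete fine) ideal on `P_κ(λ)`. -/
structure IdealP (κ lam : Cardinal.{0}) where
  mem : Set (Set (Set Ordinal.{0}))
  subset_pk : ∀ A ∈ mem, A ⊆ smallSet κ lam
  fine : Ikl κ lam ⊆ mem
  subset_mem : ∀ A ∈ mem, ∀ B ⊆ A, B ∈ mem
  sUnion_mem : ∀ X : Set (Set (Set Ordinal.{0})), X ⊆ mem →
    #X < Cardinal.lift.{1} κ → ⋃₀ X ∈ mem
  ne_top : smallSet κ lam ∉ mem

/-- `H⁺` computed from the underlying collection `Hm` of an ideal on `P_κ(λ)`. -/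
def plusOf (κ lam : Cardinal.{0}) (Hm : Set (Set (Set Ordinal.{0}))) :
    Set (Set (Set Ordinal.{0})) :=
  {A | A ⊆ smallSet κ lam ∧ A ∉ Hm}

/-- `H⁺`. -/
def IdealP.plus {κ lam : Cardinal.{0}} (H : IdealP κ lam) : Set (Set (Set Ordinal.{0})) :=
  plusOf κ lam H.mem

/-- `cof(H)`. -/
def IdealP.cof {κ lam : Cardinal.{0}} (H : IdealP κ lam) : Cardinal.{0} :=
  leastCard fun X : Set (Set (Set Ordinal.{0})) =>
    X ⊆ H.mem ∧ ∀ A, A ∈ H.mem ↔ ∃ B ∈ X, A ⊆ B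

/-- `cof̄(H)`. -/
def IdealP.cofBar {κ lam : Cardinal.{0}} (H : IdealP κ lam) : Cardinal.{0} :=
  leastCard fun X : Set (Set (Set Ordinal.{0})) =>
    X ⊆ H.mem ∧ ∀ A ∈ H.mem, ∃ x ⊆ X, #x < Cardinal.lift.{1} κ ∧ A ⊆ ⋃₀ x

/-- `d^κ_{κ,λ}`. -/
def domP (κ lam : Cardinal.{0}) : Cardinal.{0} :=
  leastCard fun F : Set (Ordinal.{0} → Set Ordinal.{0}) =>
    (∀ f ∈ F, ∀ α < κ.ord, f α ∈ smallSet κ lam) ∧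
    ∀ g : Ordinal.{0} → Set Ordinal.{0}, (∀ α < κ.ord, g α ∈ smallSet κ lam) →
      ∃ f ∈ F, ∀ α < κ.ord, g α ⊆ f α

/-- A maximal almost disjoint family of size `≥ κ` for `H` (a member of `M_H^{≥κ}`). -/
def IsMad {κ lam : Cardinal.{0}} (H : IdealP κ lam) (Q : Set (Set (Set Ordinal.{0}))) : Prop :=
  Q ⊆ H.plus ∧ Cardinal.lift.{1} κ ≤ #Q ∧
  (∀ A ∈ Q, ∀ B ∈ Q, A ≠ B → A ∩ B ∈ H.mem) ∧
  ∀ C ∈ H.plus, ∃ A ∈ Q, A ∩ C ∈ H.plus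

/-- The (small) cardinal `c` with `lift c = c'`, used to pull `λ^{<κ} = |P_κ(λ)|` down. -/
def downCard (c : Cardinal.{1}) : Cardinal.{0} :=
  sInf {d : Cardinal.{0} | Cardinal.lift.{1} d = c}

open Classical in
/-- The number `a_H`. -/
def aNum {κ lam : Cardinal.{0}} (H : IdealP κ lam) : Cardinal.{0} :=
  if ∃ Q, IsMad H Q then sInf {c | ∃ Q, IsMad H Q ∧ Cardinal.lift.{1} c = #Q}
  else 2 ^ Order.succ (downCard #(smallSet κ lam))

/-- Weak `π`-point. -/
def WeakPiPoint {κ lam : Cardinal.{0}} (H : IdealP κ lam) : Prop :=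
  ∀ f : Ordinal.{0} → Set (Set Ordinal.{0}), (∀ α < κ.ord, f α ∈ H.mem) →
    ∀ A ∈ H.plus, ∃ B ∈ H.plus, B ⊆ A ∧ ∀ α < κ.ord, B ∩ f α ∈ Ikl κ lam

/-- `∪(a ∩ κ)`. -/
def supK (κ : Cardinal.{0}) (a : Set Ordinal.{0}) : Ordinal.{0} :=
  sSup (a ∩ Iio κ.ord)

/-- The relation `a ≺ b`. -/
def prec (κ : Cardinal.{0}) (a b : Set Ordinal.{0}) : Prop :=
  a ⊆ b ∧ supK κ a < supK κ b

/-- `[A]_κ²`. -/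
def pairsK (κ : Cardinal.{0}) (A : Set (Set Ordinal.{0})) : Set (Ordinal.{0} × Set Ordinal.{0}) :=
  {p | ∃ a ∈ A, ∃ b ∈ A, supK κ a < supK κ b ∧ p = (supK κ a, b)}

/-- `[A]_≺²`. -/
def pairsPrec (κ : Cardinal.{0}) (A : Set (Set Ordinal.{0})) :
    Set (Ordinal.{0} × Set Ordinal.{0}) :=
  {p | ∃ a ∈ A, ∃ b ∈ A, prec κ a b ∧ p = (supK κ a, b)}

/-- `[A]_{κ,κ}²`. -/
def pairsKK (κ : Cardinal.{0}) (A : Set (Set Ordinal.{0})) : Set (Ordinal.{0} × Ordinal.{0}) :=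
  {p | ∃ a ∈ A, ∃ b ∈ A, supK κ a < supK κ b ∧ p = (supK κ a, supK κ b)}

/-- `S` is a set of ordinals of order type `α`. -/
def OrdType (S : Set Ordinal.{0}) (α : Ordinal.{0}) : Prop :=
  ∃ e : Ordinal.{0} → Ordinal.{0},
    (∀ i < α, ∀ j < α, i < j → e i < e j) ∧ e '' Iio α = S

/-- `(B, ≺)` has order type `α`. -/
def OrdTypePrec (κ : Cardinal.{0}) (B : Set (Set Ordinal.{0})) (α : Ordinal.{0}) : Prop :=
  ∃ e : Ordinal.{0} → Set Ordinal.{0},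
    (∀ i < α, ∀ j < α, i < j → prec κ (e i) (e j)) ∧ e '' Iio α = B

/-- The partition relation `κ → (κ, θ)²`. -/
def ArrowKTheta (κ : Cardinal.{0}) (θ : Ordinal.{0}) : Prop :=
  ∀ f : Ordinal.{0} → Ordinal.{0} → Fin 2, ∃ A ⊆ Iio κ.ord,
    (OrdType A κ.ord ∧ ∀ α ∈ A, ∀ β ∈ A, α < β → f α β = 0) ∨
    (OrdType A θ ∧ ∀ α ∈ A, ∀ β ∈ A, α < β → f α β = 1)

/-- `κ` is weakly compact. -/
def WeaklyCompact (κ : Cardinal.{0}) : Prop :=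
  ∀ f : Ordinal.{0} → Ordinal.{0} → Fin 2, ∃ A ⊆ Iio κ.ord,
    OrdType A κ.ord ∧ ∃ i, ∀ α ∈ A, ∀ β ∈ A, α < β → f α β = i

/-- The partition relation `J⁺ → (J⁺, α)²` for an ideal on `κ`. -/
def ArrowJ {κ : Cardinal.{0}} (J : IdealK κ) (α : Ordinal.{0}) : Prop :=
  ∀ A ∈ J.plus, ∀ f : Ordinal.{0} → Ordinal.{0} → Fin 2,
    ∃ B ⊆ A, (B ∈ J.plus ∧ ∀ β ∈ B, ∀ γ ∈ B, β < γ → f β γ = 0) ∨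
             (OrdType B α ∧ ∀ β ∈ B, ∀ γ ∈ B, β < γ → f β γ = 1)

/-- The square bracket relation `J⁺ → [J⁺]_ρ²` for an ideal on `κ`. -/
def SqBrJ {κ : Cardinal.{0}} (J : IdealK κ) (ρ : Cardinal.{0}) : Prop :=
  ∀ A ∈ J.plus, ∀ f : Ordinal.{0} → Ordinal.{0} → Ordinal.{0},
    (∀ β ∈ A, ∀ γ ∈ A, β < γ → f β γ < ρ.ord) →
    ∃ B ∈ J.plus, B ⊆ A ∧ {ξ | ∃ β ∈ B, ∃ γ ∈ B, β < γ ∧ f β γ = ξ} ≠ Iio ρ.ord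

/-- `H⁺ →_κ (H⁺, α)²`. -/
def ArrowP (κ lam : Cardinal.{0}) (Hm : Set (Set (Set Ordinal.{0}))) (α : Ordinal.{0}) : Prop :=
  ∀ F : Ordinal.{0} → Set Ordinal.{0} → Fin 2, ∀ A ∈ plusOf κ lam Hm,
    ∃ B ⊆ A, (B ∈ plusOf κ lam Hm ∧ ∀ p ∈ pairsK κ B, F p.1 p.2 = 0) ∨
             (OrdTypePrec κ B α ∧ ∀ p ∈ pairsK κ B, F p.1 p.2 = 1)

/-- `H⁺ →_{κ,κ} (H⁺, α)²`. -/
def ArrowPKK (κ lam : Cardinal.{0}) (Hm : Set (Set (Set Ordinal.{0}))) (α : Ordinal.{0}) : Prop :=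
  ∀ F : Ordinal.{0} → Ordinal.{0} → Fin 2, ∀ A ∈ plusOf κ lam Hm,
    ∃ B ⊆ A, (B ∈ plusOf κ lam Hm ∧ ∀ p ∈ pairsKK κ B, F p.1 p.2 = 0) ∨
             (OrdTypePrec κ B α ∧ ∀ p ∈ pairsKK κ B, F p.1 p.2 = 1)

/-- `H⁺ →_{κ,κ} (H⁺; α)²`. -/
def ArrowPKKsemi (κ lam : Cardinal.{0}) (Hm : Set (Set (Set Ordinal.{0}))) (α : Ordinal.{0}) :
    Prop :=
  ∀ F : Ordinal.{0} → Ordinal.{0} → Fin 2, ∀ A ∈ plusOf κ lam Hm,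
    ∃ B ⊆ A, (B ∈ plusOf κ lam Hm ∧ ∀ p ∈ pairsKK κ B, F p.1 p.2 = 0) ∨
             (OrdType {o | ∃ a ∈ B, supK κ a = o} α ∧ ∀ p ∈ pairsKK κ B, F p.1 p.2 = 1)

/-- `H⁺ →_κ (H⁺)²`. -/
def ArrowPConst (κ lam : Cardinal.{0}) (Hm : Set (Set (Set Ordinal.{0}))) : Prop :=
  ∀ F : Ordinal.{0} → Set Ordinal.{0} → Fin 2, ∀ A ∈ plusOf κ lam Hm,
    ∃ B ∈ plusOf κ lam Hm, B ⊆ A ∧ ∃ i, ∀ p ∈ pairsK κ B, F p.1 p.2 = i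

/-- `H⁺ →_{κ,κ} [H⁺]_ρ²`. -/
def SqBrPKK (κ lam : Cardinal.{0}) (Hm : Set (Set (Set Ordinal.{0}))) (ρ : Cardinal.{0}) : Prop :=
  ∀ F : Ordinal.{0} → Ordinal.{0} → Ordinal.{0},
    (∀ α β : Ordinal.{0}, α < β → β < κ.ord → F α β < ρ.ord) →
    ∀ A ∈ plusOf κ lam Hm, ∃ B ∈ plusOf κ lam Hm, B ⊆ A ∧
      {ξ | ∃ p ∈ pairsKK κ B, F p.1 p.2 = ξ} ≠ Iio ρ.ord

/-- The class `K(κ,λ)`. -/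
def Kset (κ lam : Cardinal.{0}) : Set Cardinal.{0} :=
  {σ | lam ≤ σ ∧ ∃ T ⊆ smallSet κ lam, Cardinal.lift.{1} σ = #T ∧
    ∀ a ∈ smallSet κ lam, #{t ∈ T | t ⊆ a} < Cardinal.lift.{1} κ}

end

end PaperFormal

/-!
Let `K` be the well order of type `κ = ν⁺`, let `N` be a set of size `ν`, and let `F i : K → K` be
fewer than `d̄_κ` functions. It suffices to find one `h` agreeing somewhere with each of them. This
is immediate for at most `κ` functions; otherwise adjoining constants or an index in `K` does not
enlarge the family, so the families below are all escaped by some `g`.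

If the values lie in `N`, each `F i` takes some value `v i` cofinally often, say at `next i a ≥ a`.
Let `g` escape the functions `next i` together with the constants, and let `c a` be the least
element above `a` closed under `g`. If `next i a ≤ g a`, then `c (next i a) = c a`, so the single
point `next i a` determines the enumeration in type `N` of the initial segment below `c a`. Since
`g` bounds the constants as well, each `b` has an index `n b`, independent of `i`, in such an
enumeration; by pigeonhole one index serves `ν` many `b`, and these encode all the possible
values `v i`.

In general, identify `K × K` with `K` and let `g` escape the functions `a ↦ F i (a, b)`. At some
`a` the value `F i (a, b)` is at most `g a`, so it is given by an index in `N`. As a function of `b`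
this index can be guessed by the previous case.
-/

namespace PaperFormal

open Order

universe u

section Escaping

variable {ι K N : Type u}

/-- `g` escapes the family `f` if every subfamily of fewer than `#K` members lies below `g` at some
common point, i.e. its supremum does not dominate `g` everywhere. Over `K = Iio κ.ord`, the number
`d̄_κ` is the least size of a family escaped by no function. -/
def Escapes [LE K] (f : ι → K → K) (g : K → K) : Prop :=
  ∀ s : Set ι, #s < #K → ∃ a, ∀ i ∈ s, f i a ≤ g a

theorem Escapes.exists_apply_le [LE K] [Nontrivial K] {f : ι → K → K} {g : K → K}
    (hg : Escapes f g) (i : ι) : ∃ a, f i a ≤ g a := by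
  obtain ⟨a, ha⟩ := hg {i} (by simpa using one_lt_iff_nontrivial.2 ‹_›)
  exact ⟨a, ha i rfl⟩

-- If no index worked for `b`, a counterexample for each `n` together with the constant function `b`
-- would form a small subfamily, and `b ≤ g a` makes `b = e a n` for some `n`.
theorem Escapes.exists_index [Preorder K] (hK : ℵ₀ ≤ #K) (hNK : #N < #K) {f : ι → K → K}
    {g : K → K} (hg : Escapes (Sum.elim f fun b _ => b) g) {e : K → N → K}
    (he : ∀ a, Iic (g a) ⊆ range (e a)) (b : K) : ∃ n, ∀ i, ∃ a, f i a ≤ g a ∧ e a n = b := by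
  by_contra! hb
  choose i hi using hb
  have hcard : #(insert (Sum.inr b) (range fun n => Sum.inl (i n)) : Set (ι ⊕ K)) < #K :=
    mk_insert_le.trans_lt <| add_lt_of_lt hK (mk_range_le.trans_lt hNK) (one_lt_aleph0.trans_le hK)
  obtain ⟨a, ha⟩ := hg _ hcard
  obtain ⟨n, hn⟩ := he a (ha _ (mem_insert _ _))
  exact hi n a (ha _ (mem_insert_of_mem _ (mem_range_self n))) hn

theorem exists_forall_Iic_subset_range [Preorder K] (hIic : ∀ a : K, #(Iic a) ≤ #N) :
    ∃ s : K → N → K, ∀ a, Iic a ⊆ range (s a) := by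
  have (a : K) : ∃ s : N → K, Iic a ⊆ range s := by
    obtain ⟨e⟩ := hIic a
    exact ⟨Function.extend e Subtype.val fun _ => a,
      fun b hb => ⟨e ⟨b, hb⟩, e.injective.extend_apply _ _ _⟩⟩
  choose s hs using this
  exact ⟨s, hs⟩

theorem exists_forall_exists_eq_of_mk_le {Y : Type u} [Nonempty Y] (hι : #ι ≤ #K)
    (F : ι → K → Y) : ∃ h : K → Y, ∀ i, ∃ a, F i a = h a := by
  obtain ⟨k⟩ := hι
  exact ⟨Function.extend k (fun i => F i (k i)) fun _ => Classical.arbitrary Y,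
    fun i => ⟨k i, (k.injective.extend_apply (fun i => F i (k i)) _ i).symm⟩⟩

variable [LinearOrder K]

theorem exists_forall_mem_lt_of_mk_lt_cof {s : Set K} (hs : #s < cof K) : ∃ c, ∀ b ∈ s, b < c :=
  not_isCofinal_iff.1 fun h => (cof_le h).not_gt hs

theorem exists_isCofinal_preimage_singleton (hN : #N < cof K) (φ : K → N) :
    ∃ v, IsCofinal (φ ⁻¹' {v}) := by
  have hcover : ⋃ v, φ ⁻¹' {v} = Set.univ := eq_univ_of_forall fun a => mem_iUnion.2 ⟨φ a, rfl⟩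
  exact isCofinal_of_isCofinal_iUnion (hcover ▸ IsCofinal.univ) hN

variable [WellFoundedLT K] [IsRegularCardinalOrder K]

theorem exists_gt_forall_lt_map_lt (hK : ℵ₀ < #K) (g : K → K) (a : K) :
    ∃ c, a < c ∧ ∀ b < c, g b < c := by
  have hbound (x : K) : ∃ y, ∀ b ∈ g '' Iic x, b < y :=
    exists_forall_mem_lt_of_mk_lt_cof <| mk_image_le.trans_lt <| by
      simpa using mk_Iic_lt x ord_cardinalMk hK.le
  choose G hG using hbound
  let C : Set K := {c | ∀ b ∈ range fun n => G^[n] a, b < c}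
  have hne : C.Nonempty :=
    exists_forall_mem_lt_of_mk_lt_cof <| (countable_range _).le_aleph0.trans_lt (by simpa)
  let c := wellFounded_lt.min C hne
  have hc (n : ℕ) : G^[n] a < c := wellFounded_lt.min_mem C hne _ (mem_range_self n)
  refine ⟨c, hc 0, fun b hb => ?_⟩
  obtain ⟨n, hn⟩ : ∃ n, b ≤ G^[n] a := by
    by_contra! h
    have hbC : b ∈ C := forall_mem_range.2 h
    exact wellFounded_lt.not_lt_min C hbC hb
  calc g b < G (G^[n] a) := hG _ _ (mem_image_of_mem g hn)
    _ = G^[n + 1] a := (Function.iterate_succ_apply' G n a).symm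
    _ < c := hc (n + 1)

theorem exists_lt_eq_on_Icc (hK : ℵ₀ < #K) (g : K → K) :
    ∃ c : K → K, (∀ a, a < c a) ∧ ∀ a, ∀ b ∈ Icc a (g a), c b = c a := by
  let C (a : K) : Set K := {c | a < c ∧ ∀ b < c, g b < c}
  have hC (a : K) : (C a).Nonempty := exists_gt_forall_lt_map_lt hK g a
  refine ⟨fun a => wellFounded_lt.min (C a) (hC a),
    fun a => (wellFounded_lt.min_mem (C a) (hC a)).1, fun a b hb => ?_⟩
  have : C b = C a := Set.ext fun c =>
    ⟨fun h => ⟨hb.1.trans_lt h.1, h.2⟩, fun h => ⟨hb.2.trans_lt (h.2 a h.1), h.2⟩⟩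
  simp only [this]

variable [Infinite N]

theorem mk_Iic_le_of_mk_eq_succ (hK : #K = succ #N) (a : K) : #(Iic a) ≤ #N := by
  have hinf : ℵ₀ ≤ #K := hK ▸ (aleph0_le_mk N).trans (le_succ _)
  exact lt_succ_iff.1 (hK ▸ mk_Iic_lt a ord_cardinalMk hinf)

theorem exists_forall_exists_eq_of_escapes_sum (hK : #K = succ #N) (φ : ι → K → N)
    (hesc : ∀ f : ι ⊕ K → K → K, ∃ g, Escapes f g) : ∃ t : K → N, ∀ i, ∃ b, φ i b = t b := by
  have hNK : #N < #K := hK ▸ lt_succ _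
  have hK₀ : ℵ₀ < #K := (aleph0_le_mk N).trans_lt hNK
  choose v hv using fun i => exists_isCofinal_preimage_singleton (by simpa) (φ i)
  choose next hnext hle using hv
  obtain ⟨g, hg⟩ := hesc (Sum.elim next fun b _ => b)
  obtain ⟨c, hlt, hc⟩ := exists_lt_eq_on_Icc hK₀ g
  have hgc (a : K) : g a ≤ c a := by
    rcases le_total a (g a) with h | h
    · exact hc a (g a) ⟨h, le_rfl⟩ ▸ (hlt (g a)).le
    · exact h.trans (hlt a).le
  obtain ⟨s, hs⟩ := exists_forall_Iic_subset_range (mk_Iic_le_of_mk_eq_succ hK)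
  choose n hn using hg.exists_index hK₀.le hNK fun a => (Iic_subset_Iic.2 (hgc a)).trans (hs (c a))
  obtain ⟨m, hm⟩ := infinite_pigeonhole_card_lt n hNK hK₀.le
  obtain ⟨k⟩ := hm.le
  obtain ⟨r, hr⟩ := (Subtype.val_injective.comp k.injective).hasLeftInverse
  refine ⟨fun b => r (s (c b) m), fun i => ?_⟩
  obtain ⟨a, hga, ha⟩ := hn (k (v i)) i
  have hkm : n (k (v i)) = m := (k (v i)).2
  refine ⟨next i a, ?_⟩
  calc φ i (next i a) = v i := hnext i a
    _ = r (k (v i)) := (hr (v i)).symm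
    _ = r (s (c (next i a)) m) := by rw [hc a _ ⟨hle i a, hga⟩, ← ha, hkm]

theorem exists_forall_exists_eq_of_escapes (hK : #K = succ #N) (F : ι → K → K)
    (hesc : ∀ α : Type u, #α ≤ #ι → ∀ f : α → K → K, ∃ g, Escapes f g) :
    ∃ h : K → K, ∀ i, ∃ a, F i a = h a := by
  have hK₀ : ℵ₀ ≤ #K := hK ▸ (aleph0_le_mk N).trans (le_succ _)
  have : Infinite K := infinite_iff.2 hK₀
  rcases le_total #ι #K with hι | hι
  · exact exists_forall_exists_eq_of_mk_le hι F
  have hι₀ : ℵ₀ ≤ #ι := hK₀.trans hι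
  obtain ⟨p⟩ : Nonempty (K × K ≃ K) := Cardinal.eq.1 (by simp [mul_eq_self hK₀])
  obtain ⟨g, hg⟩ := hesc (ι × K) (by simpa using mul_le_of_le hι₀ le_rfl hι)
    fun q a => F q.1 (p (a, q.2))
  obtain ⟨s, hs⟩ := exists_forall_Iic_subset_range (mk_Iic_le_of_mk_eq_succ hK)
  have hindex (i : ι) (b : K) : ∃ n a, s (g a) n = F i (p (a, b)) := by
    obtain ⟨a, ha⟩ := hg.exists_apply_le (i, b)
    obtain ⟨n, hn⟩ := hs (g a) ha
    exact ⟨n, a, hn⟩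
  choose n a hna using hindex
  obtain ⟨t, ht⟩ := exists_forall_exists_eq_of_escapes_sum hK n
    (hesc (ι ⊕ K) (by simpa using add_le_of_le hι₀ le_rfl hι))
  refine ⟨fun x => s (g (p.symm x).1) (t (p.symm x).2), fun i => ?_⟩
  obtain ⟨b, hb⟩ := ht i
  exact ⟨p (a i b, b), by simp only [Equiv.symm_apply_apply, ← hb, hna]⟩

end Escaping

section Coding

variable {X : Type 1} {P : Set X → Prop} {F : Set X} {κ : Cardinal.{0}}

theorem lift_leastCard_le (hF : P F) : Cardinal.lift.{1} (leastCard P) ≤ #F := by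
  by_contra! h
  obtain ⟨c, hc⟩ := mem_range_lift_of_le h.le
  have hle : leastCard P ≤ c := csInf_le' ⟨F, hF, hc⟩
  exact (hc ▸ h).not_ge (lift_le.2 hle)

theorem exists_mk_eq_lift_leastCard [Small.{0} F] (hF : P F) :
    ∃ G, P G ∧ #G = Cardinal.lift.{1} (leastCard P) := by
  obtain ⟨G, hG, hcard⟩ := csInf_mem (s := {c : Cardinal.{0} | ∃ F : Set X, P F ∧
    Cardinal.lift.{1} c = #F}) ⟨#(Shrink F), F, hF, by simp⟩
  exact ⟨G, hG, hcard.symm⟩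

theorem isRegularCardinalOrder_Iio_ord (hκ : κ.IsRegular) : IsRegularCardinalOrder (Iio κ.ord) where
  type_lt_le_ord_cof := by
    simp [Ordinal.cof_Iio, ← Ordinal.lift_cof, hκ.cof_ord, ← lift_ord]

/-- The coding in `funOn κ` of a function on `Iio κ.ord`, with the value `0` elsewhere. -/
noncomputable def code (h : Iio κ.ord → Iio κ.ord) : Ordinal.{0} → Ordinal.{0} :=
  Function.extend Subtype.val (fun a => (h a : Ordinal)) 0

theorem code_coe (h : Iio κ.ord → Iio κ.ord) (a : Iio κ.ord) : code h a = h a :=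
  Subtype.val_injective.extend_apply _ _ a

theorem code_mem_funOn (h : Iio κ.ord → Iio κ.ord) : code h ∈ funOn κ :=
  fun α hα => code_coe h ⟨α, hα⟩ ▸ (h ⟨α, hα⟩).2

theorem exists_family_mk_eq_lift_uneq (hκ : 1 < κ) :
    ∃ (ι : Type 1) (f : ι → Iio κ.ord → Iio κ.ord), #ι = Cardinal.lift.{1} (uneq κ) ∧
      ∀ h : Iio κ.ord → Iio κ.ord, ∃ i, ∀ a, f i a ≠ h a := by
  have : Nontrivial (Iio κ.ord) := by simpa [← one_lt_iff_nontrivial]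
  obtain ⟨F, ⟨hF, hFne⟩, hcard⟩ := exists_mk_eq_lift_leastCard
    (P := fun F => F ⊆ funOn κ ∧ ∀ g ∈ funOn κ, ∃ f ∈ F, {α | α < κ.ord ∧ f α = g α} = ∅)
    (F := range (code (κ := κ))) ⟨range_subset_iff.2 code_mem_funOn, fun g hg => by
      choose d hd using fun a : Iio κ.ord => exists_ne (⟨g a, hg a a.2⟩ : Iio κ.ord)
      refine ⟨code d, mem_range_self d, eq_empty_of_forall_notMem fun α ⟨hα, h⟩ => ?_⟩
      exact hd ⟨α, hα⟩ (Subtype.ext ((code_coe d ⟨α, hα⟩).symm.trans h))⟩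
  refine ⟨F, fun f a => ⟨f.1 a, hF f.2 a a.2⟩, hcard, fun h => ?_⟩
  obtain ⟨f, hf, hne⟩ := hFne (code h) (code_mem_funOn h)
  refine ⟨⟨f, hf⟩, fun a ha => eq_empty_iff_forall_notMem.1 hne a ⟨a.2, ?_⟩⟩
  exact (congrArg Subtype.val ha).trans (code_coe h a).symm

theorem lift_domBar_le_mk (hκ : κ ≠ 0) {ι : Type 1} {f : ι → Iio κ.ord → Iio κ.ord}
    (hf : ∀ g, ¬ Escapes f g) : Cardinal.lift.{1} (domBar κ) ≤ #ι := by
  refine (lift_leastCard_le (F := range fun i => code (f i)) ⟨?_, fun g hg => ?_⟩).trans mk_range_le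
  · exact range_subset_iff.2 fun i => code_mem_funOn (f i)
  have hg' := hf fun a => ⟨g a, hg a a.2⟩
  simp only [Escapes, not_forall, not_exists, not_le, exists_prop] at hg'
  obtain ⟨s, hs, hdom⟩ := hg'
  obtain ⟨i₀, hi₀, -⟩ := hdom ⟨0, by simpa [pos_iff_ne_zero]⟩
  refine ⟨(fun i => code (f i)) '' s, image_subset_range _ _, ⟨_, mem_image_of_mem _ hi₀⟩,
    mk_image_le.trans_lt (hs.trans_eq (by simp)), fun α hα => ?_⟩
  obtain ⟨i, hi, hlt⟩ := hdom ⟨α, hα⟩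
  have hbdd : BddAbove {o | ∃ h ∈ (fun i => code (f i)) '' s, h α = o} := by
    refine ⟨κ.ord, ?_⟩
    rintro _ ⟨_, ⟨j, -, rfl⟩, rfl⟩
    exact (code_mem_funOn (f j) α hα).le
  refine lt_csSup_of_lt hbdd ⟨_, mem_image_of_mem _ hi, rfl⟩ ?_
  exact (code_coe (f i) ⟨α, hα⟩).symm ▸ hlt

end Coding

/-- If `κ` is the successor of an infinite cardinal, then `U_κ ≥ d̄_κ`. -/
theorem uneq_ge_domBar (ν κ : Cardinal.{0}) (hν : ℵ₀ ≤ ν) (hκ : κ = Order.succ ν) :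
    domBar κ ≤ uneq κ := by
  have hreg : κ.IsRegular := hκ ▸ isRegular_succ hν
  have := isRegularCardinalOrder_Iio_ord hreg
  have : Infinite (Iio ν.ord) := by simpa [infinite_iff]
  have hcard : #(Iio κ.ord) = succ #(Iio ν.ord) := by simp [hκ]
  obtain ⟨ι, f, hι, hf⟩ := exists_family_mk_eq_lift_uneq (hreg.nat_lt 1)
  by_contra! hlt
  have hesc (α : Type 1) (hα : #α ≤ #ι) (F : α → Iio κ.ord → Iio κ.ord) :
      ∃ g, Escapes F g := by
    by_contra! h
    have hle := (lift_domBar_le_mk hreg.ne_zero h).trans (hα.trans_eq hι)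
    exact hlt.not_ge (lift_le.1 hle)
  obtain ⟨h, hh⟩ := exists_forall_exists_eq_of_escapes hcard f hesc
  obtain ⟨i, hi⟩ := hf h
  obtain ⟨a, ha⟩ := hh i
  exact hi a ha

end PaperFormal
end

section
/- Suppose θ is an infinite cardinal < κ such that κ → (κ, θ)². Then H⁺ →_κ (H⁺, θ+1)² for every ideal H on P_κ(λ) with cof(H) < cov(M_{κ,κ}). -/
open Cardinal Set

namespace PaperFormal

/-!
Colouring a pair of indices according to whether an injection into lexicographically ordered
sequences reverses it shows that `κ → (κ, θ)²` forces `μ ^ |i| < κ` for `μ < κ` and `i < θ`.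

Since `cof(H) < cov(M_{κ,κ})`, there are subsets of `κ` generic over a basis of `H`. If `A` contains
a positive set `P` each of whose points sees only `H`-few points of `P` in colour `1`, the points of
`P` selected by a generic subset of `κ` form a positive set homogeneous in colour `0`. Otherwise,
by a second generic selection, every `P ⊆ A` is covered modulo `H` by the `1`-cones of fewer than
`κ` of its points. Choosing such points repeatedly and intersecting the cones gives a tree which,
by the cardinal arithmetic above, has fewer than `κ` nodes at each height `i < θ`. So the remainders
left uncovered at its nodes do not exhaust `A`; a point outside all of them lies in every cone along
a branch of length `θ`, and the branch followed by that point is homogeneous in colour `1`.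
-/
section EventuallyConst

open Filter Order

universe u v

variable {J ι : Type u} {α : Type v}

lemma cardinalInterFilter_atTop_cof (J : Type u) [LinearOrder J] [Nonempty J] :
    CardinalInterFilter (atTop : Filter J) (Order.cof J) where
  cardinal_sInter_mem S hS hmem := by
    choose! x hx using fun s hs => mem_atTop_sets.1 (hmem s hs)
    have hbdd : ¬ IsCofinal (x '' S) := fun h => ((cof_le h).trans mk_image_le).not_gt hS
    obtain ⟨y, hy⟩ : ∃ y, ∀ s ∈ S, x s < y := by simpa [IsCofinal] using hbdd
    exact mem_atTop_sets.2 ⟨y, fun z hz s hs => hx s hs z ((hy s hs).le.trans hz)⟩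

lemma eventuallyConst_pi {l : Filter J} {c : Cardinal.{u}} [CardinalInterFilter l c]
    (hι : #ι < c) {f : J → ι → α} (h : ∀ k, EventuallyConst (fun η => f η k) l) :
    EventuallyConst f l := by
  cases isEmpty_or_nonempty α
  · exact .of_subsingleton_right
  simp only [eventuallyConst_iff_exists_eventuallyEq] at h
  choose v hv using h
  refine eventuallyConst_iff_exists_eventuallyEq.2 ⟨v, ?_⟩
  filter_upwards [(eventually_cardinal_forall hι).2 hv] with η hη
  exact funext hη

variable [LinearOrder J] [Nonempty J]

lemma eventuallyConst_atTop_of_monotoneOn {α : Type u} [LinearOrder α] (hα : #α < Order.cof J)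
    {g : J → α} {x : J} (hg : MonotoneOn g (Ici x)) : EventuallyConst g atTop := by
  have := cardinalInterFilter_atTop_cof J
  have hcut : EventuallyConst (fun η v => v < g η) atTop := by
    refine eventuallyConst_pi hα fun v => eventuallyConst_pred.2 ?_
    by_cases hv : ∃ η ≥ x, v < g η
    · obtain ⟨η, hxη, hvη⟩ := hv
      left
      filter_upwards [eventually_ge_atTop η] with η' hη'
      exact hvη.trans_le (hg hxη (hxη.trans hη') hη')
    · push Not at hv
      right
      filter_upwards [eventually_ge_atTop x] with η hη
      exact (hv η hη).not_gt
  obtain ⟨η, hη⟩ := eventuallyConst_atTop.1 hcut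
  exact eventuallyConst_atTop.2 ⟨η, fun η' h => Iio_injective (hη η' h)⟩

lemma eventuallyConst_atTop_of_antitoneOn [LinearOrder α] [WellFoundedLT α]
    {g : J → α} {x : J} (hg : AntitoneOn g (Ici x)) : EventuallyConst g atTop := by
  obtain ⟨_, ⟨η, hxη, rfl⟩, hmin⟩ := wellFounded_lt.has_min (g '' Ici x) ⟨_, x, self_mem_Ici, rfl⟩
  refine eventuallyConst_atTop.2 ⟨η, fun η' h => (hg hxη (le_trans hxη h) h).antisymm ?_⟩
  exact not_lt.1 (hmin _ ⟨η', le_trans hxη h, rfl⟩)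

variable [LinearOrder ι] [WellFoundedLT ι]

lemma eventuallyConst_atTop_of_lex (hι : #ι < Order.cof J) {r : α → α → Prop}
    (hr : ∀ (g : J → α) (x : J), (∀ η ≥ x, ∀ η' ≥ η, r (g η) (g η')) → EventuallyConst g atTop)
    {f : J → ι → α}
    (hf : ∀ η η', η ≤ η' → ∀ k, (∀ j < k, f η j = f η' j) → r (f η k) (f η' k)) :
    EventuallyConst f atTop := by
  have := cardinalInterFilter_atTop_cof J
  refine eventuallyConst_pi hι fun k => ?_
  induction k using WellFoundedLT.induction with
  | ind k ih =>
    have hinit : EventuallyConst (fun η (j : Iio k) => f η j) atTop :=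
      eventuallyConst_pi ((mk_subtype_le _).trans_lt hι) fun j => ih j j.2
    obtain ⟨x, hx⟩ := eventuallyConst_atTop.1 hinit
    refine hr _ x fun η hη η' hη' => hf η η' hη' k fun j hj => ?_
    exact congrFun ((hx η hη).trans (hx η' (hη.trans hη')).symm) ⟨j, hj⟩

variable [NoMaxOrder J]

lemma not_injective_of_eventuallyConst_atTop {f : J → α} (hf : EventuallyConst f atTop) :
    ¬ Function.Injective f := by
  intro hinj
  obtain ⟨x, hx⟩ := eventuallyConst_atTop.1 hf
  obtain ⟨y, hy⟩ := exists_gt x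
  exact hy.ne' (hinj (hx y hy.le))

lemma not_strictMono_lex {α : Type u} [LinearOrder α] (hι : #ι < Order.cof J)
    (hα : #α < Order.cof J) (f : J → Lex (ι → α)) : ¬ StrictMono f := by
  refine fun hf =>
    not_injective_of_eventuallyConst_atTop (f := fun η => ofLex (f η)) ?_ hf.injective
  exact eventuallyConst_atTop_of_lex hι (r := (· ≤ ·))
    (fun g x hg => eventuallyConst_atTop_of_monotoneOn hα fun η hη η' _ h => hg η hη η' h)
    fun η η' h k hk => Pi.apply_le_of_toLex (hf.monotone h) hk

lemma not_strictAnti_lex [LinearOrder α] [WellFoundedLT α] (hι : #ι < Order.cof J)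
    (f : J → Lex (ι → α)) : ¬ StrictAnti f := by
  refine fun hf =>
    not_injective_of_eventuallyConst_atTop (f := fun η => ofLex (f η)) ?_ hf.injective
  exact eventuallyConst_atTop_of_lex hι (r := (· ≥ ·))
    (fun g x hg => eventuallyConst_atTop_of_antitoneOn fun η hη η' _ h => hg η hη η' h)
    fun η η' h k hk => Pi.apply_le_of_toLex (hf.antitone h) fun j hj => (hk j hj).symm

end EventuallyConst

section PartitionRelation

variable {κ θ μ τ : Cardinal.{0}} {i : Ordinal.{0}}

lemma mk_Iio_lt_lift (hi : i < κ.ord) : #(Iio i) < Cardinal.lift.{1} κ := by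
  rw [mk_Iio_ordinal]
  exact Cardinal.lift_lt.2 (lt_ord.1 hi)

lemma cof_Iio_ord (hτ : τ.IsRegular) : Order.cof (Iio τ.ord) = Cardinal.lift.{1} τ := by
  rw [Ordinal.cof_Iio, ← Ordinal.lift_cof, hτ.cof_ord]

lemma not_strictMonoOn_Iio_ord_lex (hτ : τ.IsRegular) (hi : i < τ.ord) (hμ : μ < τ)
    (f : Ordinal.{0} → Lex (Iio i → Iio μ.ord)) : ¬ StrictMonoOn f (Iio τ.ord) := by
  intro hf
  have := (isSuccLimit_ord hτ.aleph0_le).nonempty_Iio.to_subtype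
  have := (isSuccLimit_ord hτ.aleph0_le).isSuccPrelimit.noMaxOrder_Iio
  have hcof := cof_Iio_ord hτ
  exact not_strictMono_lex (hcof ▸ mk_Iio_lt_lift hi) (hcof ▸ mk_Iio_lt_lift (ord_lt_ord.2 hμ))
    ((Iio τ.ord).domRestrict f) fun η η' h => hf η.2 η'.2 h

lemma not_strictAntiOn_Iio_ord_lex (hτ : τ.IsRegular) (hi : i < τ.ord)
    (f : Ordinal.{0} → Lex (Iio i → Iio μ.ord)) : ¬ StrictAntiOn f (Iio τ.ord) := by
  intro hf
  have := (isSuccLimit_ord hτ.aleph0_le).nonempty_Iio.to_subtype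
  have := (isSuccLimit_ord hτ.aleph0_le).isSuccPrelimit.noMaxOrder_Iio
  exact not_strictAnti_lex (cof_Iio_ord hτ ▸ mk_Iio_lt_lift hi)
    ((Iio τ.ord).domRestrict f) fun η η' h => hf η.2 η'.2 h

lemma exists_isRegular_le_of_lt_ord (hθ : ℵ₀ ≤ θ) (hi : i < θ.ord) :
    ∃ τ : Cardinal.{0}, τ.IsRegular ∧ i < τ.ord ∧ τ ≤ θ := by
  by_cases hfin : i.card < ℵ₀
  · exact ⟨ℵ₀, isRegular_aleph0, lt_ord.2 hfin, hθ⟩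
  · exact ⟨Order.succ i.card, isRegular_succ (not_lt.1 hfin), lt_ord.2 (Order.lt_succ _),
      Order.succ_le_of_lt (lt_ord.1 hi)⟩

lemma exists_injOn_lex_of_le_power (h0 : 0 < κ) (h : κ ≤ μ ^ i.card) :
    ∃ x : Ordinal.{0} → Lex (Iio i → Iio μ.ord), InjOn x (Iio κ.ord) := by
  have hle : #(Iio κ.ord) ≤ #(Iio i → Iio μ.ord) := by
    rw [← power_def]
    simpa only [mk_Iio_ordinal, card_ord, ← Cardinal.lift_power] using Cardinal.lift_le.2 h
  obtain ⟨φ⟩ := hle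
  have : Nonempty (Iio i → Iio μ.ord) := ⟨φ ⟨0, Cardinal.ord_pos.2 h0⟩⟩
  exact exists_injOn_iff_injective.2 ⟨φ, φ.injective⟩

lemma power_lt_of_arrowKTheta (hκ : κ.IsRegular) (hθ : ℵ₀ ≤ θ) (hθκ : θ < κ)
    (harrow : ArrowKTheta κ θ.ord) (hμ : μ < κ) (hi : i < θ.ord) : μ ^ i.card < κ := by
  classical
  by_contra! hle
  obtain ⟨x, hx⟩ := exists_injOn_lex_of_le_power hκ.pos hle
  -- Sierpiński's colouring: homogeneous sets are monotone or antitone lexicographic sequences.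
  obtain ⟨_, hA, ⟨⟨e, he, rfl⟩, hcol⟩ | ⟨⟨e, he, rfl⟩, hcol⟩⟩ :=
    harrow fun α β => if x β < x α then 1 else 0
  · refine not_strictMonoOn_Iio_ord_lex hκ (hi.trans (ord_lt_ord.2 hθκ)) hμ (x ∘ e) ?_
    intro η hη η' hη' h
    have hlt := he η hη η' hη' h
    have hnot : ¬ x (e η') < x (e η) := by
      simpa using hcol _ ⟨η, hη, rfl⟩ _ ⟨η', hη', rfl⟩ hlt
    exact (not_lt.1 hnot).lt_of_ne (hx.ne (hA ⟨η, hη, rfl⟩) (hA ⟨η', hη', rfl⟩) hlt.ne)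
  · obtain ⟨τ, hτ, hiτ, hτθ⟩ := exists_isRegular_le_of_lt_ord hθ hi
    have hsub : Iio τ.ord ⊆ Iio θ.ord := Iio_subset_Iio (ord_le_ord.2 hτθ)
    refine not_strictAntiOn_Iio_ord_lex hτ hiτ (x ∘ e) fun η hη η' hη' h => ?_
    have hlt := he η (hsub hη) η' (hsub hη') h
    have hone : x (e η') < x (e η) := by
      simpa using hcol _ ⟨η, hsub hη, rfl⟩ _ ⟨η', hsub hη', rfl⟩ hlt
    exact hone

end PartitionRelation

section Generic

variable {κ lam ν ρ : Cardinal.{0}}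

lemma exists_mem_forall_denseOpen {β : Type 1} (hν : 1 ≤ ν) {X : Set β}
    (hX : #X < Cardinal.lift.{1} (covM ν ρ)) {D : β → Set (Set Ordinal.{0})}
    (hD : ∀ B ∈ X, DenseOpen ν ρ (D B)) : ∃ x ∈ cantor ρ, ∀ B ∈ X, x ∈ D B := by
  by_contra! hcon
  have hcard : #((fun B => cantor ρ \ D B) '' X) < Cardinal.lift.{1} (covM ν ρ) :=
    mk_image_le.trans_lt hX
  obtain ⟨c, hc⟩ := mem_range_lift_of_le hcard.le
  rw [← hc, Cardinal.lift_lt] at hcard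
  refine hcard.not_ge (csInf_le' ⟨_, ⟨?_, ?_⟩, hc⟩)
  · rintro _ ⟨B, hB, rfl⟩
    refine ⟨sdiff_subset, {D B}, singleton_nonempty _, ?_, by simpa using hD B hB, ?_⟩
    · simpa using hν
    · rw [sInter_singleton, sdiff_inter_self]
  · refine Subset.antisymm (sUnion_subset ?_) fun x hx => ?_
    · rintro _ ⟨B, -, rfl⟩
      exact sdiff_subset
    · obtain ⟨B, hB, hxB⟩ := hcon x hx
      exact ⟨_, ⟨B, hB, rfl⟩, hx, hxB⟩

lemma IdealP.exists_cofinal (H : IdealP κ lam) :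
    ∃ X ⊆ H.mem, (∀ A ∈ H.mem, ∃ B ∈ X, A ⊆ B) ∧ #X = Cardinal.lift.{1} H.cof := by
  have hle : #H.mem ≤ Cardinal.lift.{1} ((2 : Cardinal.{0}) ^ ((2 : Cardinal.{0}) ^ lam)) := by
    have hsub : H.mem ⊆ 𝒫 (𝒫 (Iio lam.ord)) := fun A hA a ha => (H.subset_pk A hA ha).1
    simpa [mk_powerset, mk_Iio_ordinal] using mk_le_mk_of_subset hsub
  obtain ⟨c, hc⟩ := mem_range_lift_of_le hle
  have hbasis (A : Set (Set Ordinal.{0})) : A ∈ H.mem ↔ ∃ B ∈ H.mem, A ⊆ B :=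
    ⟨fun hA => ⟨A, hA, subset_rfl⟩, fun ⟨B, hB, hAB⟩ => H.subset_mem B hB A hAB⟩
  obtain ⟨X, ⟨hX, hcof⟩, hcard⟩ : H.cof ∈ {c : Cardinal.{0} | ∃ X : Set (Set (Set Ordinal.{0})),
      (X ⊆ H.mem ∧ ∀ A, A ∈ H.mem ↔ ∃ B ∈ X, A ⊆ B) ∧ Cardinal.lift.{1} c = #X} :=
    csInf_mem ⟨c, H.mem, ⟨subset_rfl, hbasis⟩, hc⟩
  exact ⟨X, hX, fun A hA => (hcof A).1 hA, hcard.symm⟩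

lemma sSup_lt_ord (hκ : κ.IsRegular) {s : Set Ordinal.{0}} (hs : s ⊆ Iio κ.ord)
    (hcard : #s < Cardinal.lift.{1} κ) : sSup s < κ.ord := by
  refine Ordinal.sSup_lt_of_lt_cof ?_ hs
  rwa [← Ordinal.lift_cof, hκ.cof_ord]

lemma exists_subset_Iio (hκ : κ.IsRegular) {s : Set Ordinal.{0}} (hs : s ⊆ Iio κ.ord)
    (hcard : #s < Cardinal.lift.{1} κ) : ∃ γ < κ.ord, s ⊆ Iio γ := by
  refine ⟨sSup s + 1, (isSuccLimit_ord hκ.aleph0_le).add_one_lt (sSup_lt_ord hκ hs hcard), ?_⟩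
  exact fun ξ hξ => Order.lt_add_one_iff.2 (le_csSup ⟨κ.ord, fun _ h => (hs h).le⟩ hξ)

lemma denseOpen_of_local {G : Set Ordinal.{0} → Prop} (hκ : κ.IsRegular)
    (hlocal : ∀ x ⊆ Iio κ.ord, G x →
      ∃ δ < κ.ord, ∀ y ⊆ Iio κ.ord, (∀ ξ < δ, ξ ∈ y ↔ ξ ∈ x) → G y)
    (hext : ∀ γ < κ.ord, ∀ t ⊆ Iio γ, ∃ ξ < κ.ord, γ ≤ ξ ∧ G (insert ξ t)) :
    DenseOpen κ κ {x | x ⊆ Iio κ.ord ∧ G x} := by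
  refine ⟨fun x hx => hx.1, fun x ⟨hx, hGx⟩ => ?_, fun a t ⟨ha, hta, hcard⟩ => ?_⟩
  · obtain ⟨δ, hδ, hG⟩ := hlocal x hx hGx
    refine ⟨Iio δ, x ∩ Iio δ, ⟨Iio_subset_Iio hδ.le, inter_subset_right, mk_Iio_lt_lift hδ⟩,
      ⟨hx, rfl⟩, fun y ⟨hy, hyx⟩ => ⟨hy, hG y hy fun ξ hξ => ?_⟩⟩
    simpa [show ξ < δ from hξ] using Set.ext_iff.1 hyx ξ
  · obtain ⟨γ, hγ, haγ⟩ := exists_subset_Iio hκ ha hcard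
    obtain ⟨ξ, hξ, hγξ, hG⟩ := hext γ hγ t (hta.trans haγ)
    have hsub : insert ξ t ⊆ Iio κ.ord := insert_subset hξ (hta.trans ha)
    have hξa : ξ ∉ a := fun h => (haγ h).not_ge hγξ
    refine ⟨insert ξ t, ⟨hsub, ?_⟩, hsub, hG⟩
    rw [insert_inter_of_notMem hξa, inter_eq_left.2 hta]

lemma IdealP.exists_generic_notMem (hκ : κ.IsRegular) (H : IdealP κ lam) (hcof : H.cof < covM κ κ)
    {G : Set Ordinal.{0} → Set (Set Ordinal.{0})}
    (hlocal : ∀ x ⊆ Iio κ.ord, ∀ b ∈ G x,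
      ∃ δ < κ.ord, ∀ y ⊆ Iio κ.ord, (∀ ξ < δ, ξ ∈ y ↔ ξ ∈ x) → b ∈ G y)
    (hext : ∀ γ < κ.ord, ∀ t ⊆ Iio γ, ∀ N ∈ H.mem,
      ∃ ξ < κ.ord, γ ≤ ξ ∧ ∃ b ∈ G (insert ξ t), b ∉ N) :
    ∃ x ⊆ Iio κ.ord, G x ∉ H.mem := by
  obtain ⟨X, hX, hcofinal, hcard⟩ := H.exists_cofinal
  have hdense : ∀ N ∈ X, DenseOpen κ κ {x | x ⊆ Iio κ.ord ∧ ∃ b ∈ G x, b ∉ N} := by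
    refine fun N hN => denseOpen_of_local hκ ?_ fun γ hγ t ht => hext γ hγ t ht N (hX hN)
    rintro x hx ⟨b, hb, hbN⟩
    obtain ⟨δ, hδ, hG⟩ := hlocal x hx b hb
    exact ⟨δ, hδ, fun y hy hyx => ⟨b, hG y hy hyx, hbN⟩⟩
  obtain ⟨x, hx, hgen⟩ := exists_mem_forall_denseOpen
    (one_le_aleph0.trans hκ.aleph0_le) (hcard.trans_lt (Cardinal.lift_lt.2 hcof)) hdense
  refine ⟨x, hx, fun hGx => ?_⟩
  obtain ⟨N, hN, hsub⟩ := hcofinal _ hGx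
  obtain ⟨-, b, hb, hbN⟩ := hgen N hN
  exact hbN (hsub hb)

end Generic

section Ideal

variable {κ lam : Cardinal.{0}} {F : Ordinal.{0} → Set Ordinal.{0} → Fin 2}
  {a b : Set Ordinal.{0}} {γ : Ordinal.{0}} {P : Set (Set Ordinal.{0})}

lemma supK_lt_ord (hκ : κ.IsRegular) (hb : b ∈ smallSet κ lam) : supK κ b < κ.ord :=
  sSup_lt_ord hκ inter_subset_right ((mk_le_mk_of_subset inter_subset_left).trans_lt hb.2)

lemma le_supK {ξ : Ordinal.{0}} (hξb : ξ ∈ b) (hξ : ξ < κ.ord) : ξ ≤ supK κ b :=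
  le_csSup ⟨κ.ord, fun _ h => h.2.le⟩ ⟨hξb, hξ⟩

namespace IdealP

variable (H : IdealP κ lam)

lemma biUnion_mem {ι : Type 1} {I : Set ι} (hI : #I < Cardinal.lift.{1} κ)
    {N : ι → Set (Set Ordinal.{0})} (hN : ∀ i ∈ I, N i ∈ H.mem) : ⋃ i ∈ I, N i ∈ H.mem := by
  rw [← sUnion_image]
  exact H.sUnion_mem _ (image_subset_iff.2 hN) (mk_image_le.trans_lt hI)

lemma union_mem (hκ : ℵ₀ ≤ κ) {M N : Set (Set Ordinal.{0})} (hM : M ∈ H.mem) (hN : N ∈ H.mem) :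
    M ∪ N ∈ H.mem := by
  rw [← sUnion_pair]
  refine H.sUnion_mem _ (pair_subset hM hN) ?_
  exact (lt_aleph0_iff_finite.2 (toFinite _)).trans_le (by simpa using hκ)

lemma exists_mem_notMem {N : Set (Set Ordinal.{0})} (hP : P ∉ H.mem) (hN : N ∈ H.mem) :
    ∃ b ∈ P, b ∉ N :=
  not_subset.1 fun h => hP (H.subset_mem N hN P h)

lemma setOf_not_superset_mem (ha : a ∈ smallSet κ lam) : {b ∈ smallSet κ lam | ¬ a ⊆ b} ∈ H.mem :=
  H.fine ⟨fun _ h => h.1, a, ha, fun _ h => h.2⟩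

lemma setOf_supK_le_mem (hκ : ℵ₀ ≤ κ) (hle : κ ≤ lam) (hγ : γ < κ.ord) :
    {b ∈ smallSet κ lam | supK κ b ≤ γ} ∈ H.mem := by
  have hγ' : γ + 1 < κ.ord := (isSuccLimit_ord hκ).add_one_lt hγ
  have hsmall : {γ + 1} ∈ smallSet κ lam := by
    refine ⟨singleton_subset_iff.2 (hγ'.trans_le (ord_le_ord.2 hle)), ?_⟩
    simpa using one_lt_aleph0.trans_le hκ
  refine H.subset_mem _ (H.setOf_not_superset_mem hsmall) _ fun b ⟨hb, hbγ⟩ => ⟨hb, fun hsub => ?_⟩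
  exact (Order.lt_add_one_iff.2 hbγ).not_ge (le_supK (hsub rfl) hγ')

/-- `P` is sparse for the colouring `F` if each of its points is joined in colour `1` to only
`H`-few points of `P`. -/
def Sparse (F : Ordinal.{0} → Set Ordinal.{0} → Fin 2) (P : Set (Set Ordinal.{0})) : Prop :=
  ∀ a ∈ P, {b ∈ P | F (supK κ a) b ≠ 0} ∈ H.mem

variable {H}

lemma Sparse.setOf_exists_lt_mem (hsparse : H.Sparse F P) (hγ : γ < κ.ord) :
    {b ∈ P | ∃ a ∈ P, supK κ a < γ ∧ F (supK κ a) b ≠ 0} ∈ H.mem := by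
  have hunion : ⋃ α ∈ Iio γ ∩ supK κ '' P, {b ∈ P | F α b ≠ 0} ∈ H.mem := by
    refine H.biUnion_mem ((mk_le_mk_of_subset inter_subset_left).trans_lt (mk_Iio_lt_lift hγ)) ?_
    rintro _ ⟨-, a, ha, rfl⟩
    exact hsparse a ha
  refine H.subset_mem _ hunion _ ?_
  rintro b ⟨hb, a, ha, haγ, hF⟩
  exact mem_biUnion ⟨haγ, a, ha, rfl⟩ ⟨hb, hF⟩

lemma Sparse.exists_homogeneous (hκ : κ.IsRegular) (hle : κ ≤ lam) (hcof : H.cof < covM κ κ)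
    (hP : P ∈ H.plus) (hsparse : H.Sparse F P) :
    ∃ B ⊆ P, B ∈ H.plus ∧ ∀ p ∈ pairsK κ B, F p.1 p.2 = 0 := by
  let G (x : Set Ordinal.{0}) : Set (Set Ordinal.{0}) :=
    {b ∈ P | supK κ b ∈ x ∧ ∀ a ∈ P, supK κ a ∈ x → supK κ a < supK κ b → F (supK κ a) b = 0}
  obtain ⟨x, -, hx⟩ : ∃ x ⊆ Iio κ.ord, G x ∉ H.mem := by
    refine H.exists_generic_notMem hκ hcof (fun x _ b ⟨hb, hbx, hF⟩ => ?_) fun γ hγ t ht N hN => ?_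
    · refine ⟨supK κ b + 1, (isSuccLimit_ord hκ.aleph0_le).add_one_lt
        (supK_lt_ord hκ (hP.1 hb)), fun y _ hy => ?_⟩
      have hiff (ξ : Ordinal.{0}) (hξ : ξ ≤ supK κ b) : ξ ∈ y ↔ ξ ∈ x :=
        hy ξ (Order.lt_add_one_iff.2 hξ)
      exact ⟨hb, (hiff _ le_rfl).2 hbx, fun a ha hay hab =>
        hF a ha ((hiff _ hab.le).1 hay) hab⟩
    · obtain ⟨b, hb, hbN⟩ := H.exists_mem_notMem hP.2 (H.union_mem hκ.aleph0_le
        (H.union_mem hκ.aleph0_le hN (H.setOf_supK_le_mem hκ.aleph0_le hle hγ))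
        (hsparse.setOf_exists_lt_mem hγ))
      simp only [mem_union, not_or] at hbN
      obtain ⟨⟨hbN, hbγ⟩, hbF⟩ := hbN
      have hγb : γ < supK κ b := not_le.1 fun h => hbγ ⟨hP.1 hb, h⟩
      refine ⟨supK κ b, supK_lt_ord hκ (hP.1 hb), hγb.le, b, ⟨hb, mem_insert _ _, ?_⟩, hbN⟩
      rintro a ha (hab | hat) hlt
      · exact absurd hab hlt.ne
      · exact not_not.1 fun hF => hbF ⟨hb, a, ha, ht hat, hF⟩
  refine ⟨G x, fun b hb => hb.1, ⟨fun b hb => hP.1 hb.1, hx⟩, ?_⟩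
  rintro _ ⟨a, ha, b, hb, hab, rfl⟩
  exact hb.2.2 a ha.1 ha.2.1 hab

lemma exists_plus_forall_inter_mem (hκ : κ.IsRegular) (hle : κ ≤ lam) (hcof : H.cof < covM κ κ)
    (hP : P ⊆ smallSet κ lam) {W : Ordinal.{0} → Set (Set Ordinal.{0})} (hmono : Monotone W)
    (hW : ∀ γ < κ.ord, P \ W γ ∉ H.mem) :
    ∃ C ⊆ P, C ∈ H.plus ∧ ∀ γ < κ.ord, C ∩ W γ ∈ H.mem := by
  -- The bound `supK κ b ≤ ξ` with `ξ ∈ x` makes `b ∈ G x` depend only on `x` up to `ξ`, and, for a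
  -- single `b` with `γ < supK κ b`, gives a `ξ ∈ x` above `γ` such that `G x ∩ W γ` lies below `ξ`.
  let G (x : Set Ordinal.{0}) : Set (Set Ordinal.{0}) :=
    {b ∈ P | (∀ ξ ∈ x, ξ < supK κ b → b ∉ W ξ) ∧ ∃ ξ ∈ x, supK κ b ≤ ξ}
  obtain ⟨x, hxκ, hx⟩ : ∃ x ⊆ Iio κ.ord, G x ∉ H.mem := by
    refine H.exists_generic_notMem hκ hcof ?_ fun γ hγ t ht N hN => ?_
    · rintro x hxκ b ⟨hb, hbW, ξ, hξ, hbξ⟩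
      refine ⟨ξ + 1, (isSuccLimit_ord hκ.aleph0_le).add_one_lt (hxκ hξ), fun y _ hy => ?_⟩
      have hiff (ζ : Ordinal.{0}) (hζ : ζ ≤ ξ) : ζ ∈ y ↔ ζ ∈ x := hy ζ (Order.lt_add_one_iff.2 hζ)
      exact ⟨hb, fun ζ hζ hζb => hbW ζ ((hiff ζ (hζb.le.trans hbξ)).1 hζ) hζb,
        ξ, (hiff ξ le_rfl).2 hξ, hbξ⟩
    · obtain ⟨b, ⟨hb, hbW⟩, hbN⟩ := H.exists_mem_notMem (hW γ hγ) hN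
      refine ⟨max γ (supK κ b), max_lt hγ (supK_lt_ord hκ (hP hb)), le_max_left _ _, b,
        ⟨hb, ?_, _, mem_insert _ _, le_max_right _ _⟩, hbN⟩
      rintro ξ (rfl | hξt) hξb
      · exact absurd hξb (le_max_right _ _).not_gt
      · exact fun hbξ => hbW (hmono (ht hξt).le hbξ)
  refine ⟨G x, fun b hb => hb.1, ⟨fun b hb => hP hb.1, hx⟩, fun γ hγ => ?_⟩
  obtain ⟨b, hb, hbγ⟩ := H.exists_mem_notMem hx (H.setOf_supK_le_mem hκ.aleph0_le hle hγ)
  have hγb : γ < supK κ b := not_le.1 fun h => hbγ ⟨hP hb.1, h⟩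
  obtain ⟨ξ, hξ, hbξ⟩ := hb.2.2
  refine H.subset_mem _ (H.setOf_supK_le_mem hκ.aleph0_le hle (hxκ hξ)) _ fun c ⟨hc, hcW⟩ => ?_
  exact ⟨hP hc.1, not_lt.1 fun h => hc.2.1 ξ hξ h (hmono (hγb.le.trans hbξ) hcW)⟩

end IdealP

end Ideal

section Cone

variable {κ lam : Cardinal.{0}} {F : Ordinal.{0} → Set Ordinal.{0} → Fin 2}
  {P : Set (Set Ordinal.{0})}

/-- The points `b ≻ a` that `a` is joined to in colour `1`. -/
def oneCone (κ : Cardinal.{0}) (F : Ordinal.{0} → Set Ordinal.{0} → Fin 2) (a : Set Ordinal.{0}) :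
    Set (Set Ordinal.{0}) :=
  {b | prec κ a b ∧ F (supK κ a) b = 1}

lemma ordTypePrec_image_of_oneCone {α : Ordinal.{0}} {e : Ordinal.{0} → Set Ordinal.{0}}
    (he : ∀ i < α, ∀ j < α, i < j → e j ∈ oneCone κ F (e i)) :
    OrdTypePrec κ (e '' Iio α) α ∧ ∀ p ∈ pairsK κ (e '' Iio α), F p.1 p.2 = 1 := by
  refine ⟨⟨e, fun i hi j hj h => (he i hi j hj h).1, rfl⟩, ?_⟩
  rintro _ ⟨_, ⟨i, hi, rfl⟩, _, ⟨j, hj, rfl⟩, hlt, rfl⟩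
  rcases lt_trichotomy i j with hij | rfl | hji
  · exact (he i hi j hj hij).2
  · exact absurd hlt (lt_irrefl _)
  · exact absurd hlt (he j hj i hi hji).1.2.not_gt

lemma IdealP.exists_card_lt_diff_oneCone_mem {H : IdealP κ lam} (hκ : κ.IsRegular) (hle : κ ≤ lam)
    (hcof : H.cof < covM κ κ) (hP : P ⊆ smallSet κ lam)
    (hnone : ∀ C ⊆ P, H.Sparse F C → C ∈ H.mem) :
    ∃ R ⊆ P, #R < Cardinal.lift.{1} κ ∧ P \ ⋃ c ∈ R, oneCone κ F c ∈ H.mem := by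
  obtain ⟨R, hRP, hR⟩ := exists_subset_bijOn P (supK κ)
  by_contra! hcon
  let W : Ordinal.{0} → Set (Set Ordinal.{0}) :=
    fun γ => ⋃ c ∈ {c ∈ R | supK κ c < γ}, oneCone κ F c
  have hmono : Monotone W := fun γ δ h =>
    biUnion_subset_biUnion_left fun c hc => ⟨hc.1, hc.2.trans_le h⟩
  have hW (γ : Ordinal.{0}) (hγ : γ < κ.ord) : P \ W γ ∉ H.mem := by
    refine hcon _ ((sep_subset _ _).trans hRP) ?_
    rw [← mk_image_eq_of_injOn _ _ (hR.injOn.mono (sep_subset _ _))]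
    refine (mk_le_mk_of_subset ?_).trans_lt (mk_Iio_lt_lift hγ)
    rintro _ ⟨c, hc, rfl⟩
    exact hc.2
  obtain ⟨C, hCP, hC, hCW⟩ := exists_plus_forall_inter_mem hκ hle hcof hP hmono hW
  refine hC.2 (hnone C hCP fun a ha => ?_)
  have haκ : supK κ a < κ.ord := supK_lt_ord hκ (hP (hCP ha))
  obtain ⟨r, hr, hra⟩ := hR.surjOn (mem_image_of_mem _ (hCP ha))
  refine H.subset_mem _ (H.union_mem hκ.aleph0_le (H.union_mem hκ.aleph0_le
    (H.setOf_not_superset_mem (hP (hRP hr))) (H.setOf_supK_le_mem hκ.aleph0_le hle haκ))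
    (hCW _ ((isSuccLimit_ord hκ.aleph0_le).add_one_lt haκ))) _ fun b ⟨hb, hF⟩ => ?_
  by_contra! hbN
  simp only [mem_union, not_or] at hbN
  obtain ⟨⟨hrb, hab⟩, hbW⟩ := hbN
  have hrb : r ⊆ b := not_not.1 fun h => hrb ⟨hP (hCP hb), h⟩
  have hab : supK κ a < supK κ b := not_le.1 fun h => hab ⟨hP (hCP hb), h⟩
  have hcone : b ∈ oneCone κ F r := ⟨⟨hrb, hra ▸ hab⟩, hra ▸ Fin.eq_one_of_ne_zero _ hF⟩
  exact hbW ⟨hb, mem_biUnion ⟨hr, hra ▸ lt_add_one _⟩ hcone⟩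

end Cone

section Tree

variable {β : Type 1} {A : Set β} {cone : β → Set β} {R : Set β → Set β} {c : Ordinal.{0} → β}
  {i θ : Ordinal.{0}} {b : β}

/-- The node of the tree on `A` reached after the choices `c k`, `k < i`, where choosing `x` means
shrinking the current node to its intersection with `cone x`. -/
def treeNode (A : Set β) (cone : β → Set β) (c : Ordinal.{0} → β) (i : Ordinal.{0}) : Set β :=
  {b ∈ A | ∀ k < i, b ∈ cone (c k)}

/-- The nodes at height `i` of the tree on `A` in which the choices available at a node `P` are the
elements of `R P`. -/
def treeLevel (A : Set β) (cone : β → Set β) (R : Set β → Set β) (i : Ordinal.{0}) :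
    Set (Set β) :=
  {P | ∃ c, (∀ j < i, c j ∈ R (treeNode A cone c j)) ∧ treeNode A cone c i = P}

lemma treeLevel_subset_range {U : Set β}
    (hU : ∀ j < i, ∀ P ∈ treeLevel A cone R j, R P ⊆ U) :
    treeLevel A cone R i ⊆ range fun g : Iio i → U => {b ∈ A | ∀ k, b ∈ cone (g k)} := by
  rintro _ ⟨c, hc, rfl⟩
  have hcU (k : Iio i) : c k ∈ U :=
    hU k k.2 _ ⟨c, fun j hj => hc j (hj.trans k.2), rfl⟩ (hc k k.2)
  exact ⟨fun k => ⟨c k, hcU k⟩, by simp [treeNode]⟩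

lemma mk_Iio_arrow_lt_lift {κ : Cardinal.{0}} (hpow : ∀ μ < κ, μ ^ i.card < κ) {U : Type 1}
    (hU : #U < Cardinal.lift.{1} κ) : #(Iio i → U) < Cardinal.lift.{1} κ := by
  obtain ⟨μ, hμ⟩ := mem_range_lift_of_le hU.le
  rw [← hμ, Cardinal.lift_lt] at hU
  rw [← power_def, ← hμ, mk_Iio_ordinal, ← Cardinal.lift_power, Cardinal.lift_lt]
  exact hpow μ hU

lemma mk_treeLevel_lt {κ : Cardinal.{0}} (hκ : κ.IsRegular) (hθ : θ ≤ κ.ord)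
    (hpow : ∀ μ < κ, ∀ i < θ, μ ^ i.card < κ)
    (hR : ∀ P ⊆ A, #(R P) < Cardinal.lift.{1} κ) (hi : i < θ) :
    #(treeLevel A cone R i) < Cardinal.lift.{1} κ := by
  induction i using WellFoundedLT.induction with
  | ind i ih =>
    obtain ⟨U, hcard, hU⟩ : ∃ U : Set β, #U < Cardinal.lift.{1} κ ∧
        ∀ j < i, ∀ P ∈ treeLevel A cone R j, R P ⊆ U := by
      refine ⟨⋃ j ∈ Iio i, ⋃ P ∈ treeLevel A cone R j, R P, ?_,
        fun j hj P hP x hx => mem_biUnion hj (mem_biUnion hP hx)⟩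
      rw [card_biUnion_lt_iff_forall_of_isRegular hκ.lift (mk_Iio_lt_lift (hi.trans_le hθ))]
      intro j hj
      rw [card_biUnion_lt_iff_forall_of_isRegular hκ.lift (ih j hj (hj.trans hi))]
      rintro _ ⟨c, -, rfl⟩
      exact hR _ (sep_subset _ _)
    calc #(treeLevel A cone R i) ≤ #(Iio i → U) :=
          (mk_le_mk_of_subset (treeLevel_subset_range hU)).trans mk_range_le
      _ < Cardinal.lift.{1} κ := mk_Iio_arrow_lt_lift (fun μ hμ => hpow μ hμ i hi) hcard

lemma exists_forall_eq_treeNode (pick : Set β → β) :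
    ∃ c : Ordinal.{0} → β, ∀ i, c i = pick (treeNode A cone c i) :=
  ⟨WellFoundedLT.fix fun i c => pick {b ∈ A | ∀ k, ∀ hk : k < i, b ∈ cone (c k hk)},
    fun i => WellFoundedLT.fix_eq _ i⟩

lemma exists_branch (hb : b ∈ A)
    (hbR : ∀ i < θ, ∀ P ∈ treeLevel A cone R i, b ∉ P \ ⋃ c ∈ R P, cone c) :
    ∃ c : Ordinal.{0} → β, ∀ i < θ, c i ∈ R (treeNode A cone c i) ∧ b ∈ cone (c i) := by
  have : Nonempty β := ⟨b⟩
  choose! pick hpick using fun P (h : ∃ c ∈ R P, b ∈ cone c) => h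
  obtain ⟨c, hc⟩ := exists_forall_eq_treeNode (A := A) (cone := cone) pick
  refine ⟨c, fun i => ?_⟩
  induction i using WellFoundedLT.induction with
  | ind i ih =>
    intro hi
    have hnode : b ∈ treeNode A cone c i := ⟨hb, fun k hk => (ih k hk (hk.trans hi)).2⟩
    have hlevel : treeNode A cone c i ∈ treeLevel A cone R i :=
      ⟨c, fun k hk => (ih k hk (hk.trans hi)).1, rfl⟩
    have hex : ∃ c' ∈ R (treeNode A cone c i), b ∈ cone c' := by
      simpa [hnode] using hbR i hi _ hlevel
    rw [hc i]
    exact hpick _ hex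

end Tree

section Arrow

variable {κ lam : Cardinal.{0}} {F : Ordinal.{0} → Set Ordinal.{0} → Fin 2} {θ : Ordinal.{0}}
  {A : Set (Set Ordinal.{0})} {R : Set (Set Ordinal.{0}) → Set (Set Ordinal.{0})}

lemma IdealP.exists_mem_forall_treeLevel {H : IdealP κ lam} (hκ : κ.IsRegular) (hθ : θ < κ.ord)
    (hpow : ∀ μ < κ, ∀ i < θ, μ ^ i.card < κ) {cone : Set Ordinal.{0} → Set (Set Ordinal.{0})}
    (hA : A ∉ H.mem) (hR : ∀ P ⊆ A, #(R P) < Cardinal.lift.{1} κ)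
    (hrem : ∀ P ⊆ A, P \ ⋃ c ∈ R P, cone c ∈ H.mem) :
    ∃ b ∈ A, ∀ i < θ, ∀ P ∈ treeLevel A cone R i, b ∉ P \ ⋃ c ∈ R P, cone c := by
  have hmem : ⋃ i ∈ Iio θ, ⋃ P ∈ treeLevel A cone R i, P \ ⋃ c ∈ R P, cone c ∈ H.mem := by
    refine H.biUnion_mem (mk_Iio_lt_lift hθ) fun i hi =>
      H.biUnion_mem (mk_treeLevel_lt hκ hθ.le hpow hR hi) ?_
    rintro _ ⟨c, -, rfl⟩
    exact hrem _ (sep_subset _ _)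
  obtain ⟨b, hb, hbN⟩ := H.exists_mem_notMem hA hmem
  exact ⟨b, hb, fun i hi P hP h => hbN (mem_biUnion hi (mem_biUnion hP h))⟩

lemma exists_ordTypePrec_add_one_of_branch {c : Ordinal.{0} → Set Ordinal.{0}}
    {b : Set Ordinal.{0}} (hb : b ∈ A) (hR : ∀ P ⊆ A, R P ⊆ P)
    (hc : ∀ i < θ, c i ∈ R (treeNode A (oneCone κ F) c i) ∧ b ∈ oneCone κ F (c i)) :
    ∃ B ⊆ A, OrdTypePrec κ B (θ + 1) ∧ ∀ p ∈ pairsK κ B, F p.1 p.2 = 1 := by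
  classical
  have hnode (i : Ordinal.{0}) (hi : i < θ) : c i ∈ treeNode A (oneCone κ F) c i :=
    hR _ (sep_subset _ _) (hc i hi).1
  refine ⟨Function.update c θ b '' Iio (θ + 1), ?_,
    ordTypePrec_image_of_oneCone fun i _ j hj hij => ?_⟩
  · rintro _ ⟨i, hi, rfl⟩
    rcases (Order.lt_add_one_iff.1 (mem_Iio.1 hi)).eq_or_lt with rfl | hi
    · simpa using hb
    · simpa [hi.ne] using (hnode i hi).1
  · rcases (Order.lt_add_one_iff.1 hj).eq_or_lt with rfl | hj
    · simpa [hij.ne] using (hc i hij).2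
    · simpa [hj.ne, (hij.trans hj).ne] using (hnode j hj).2 i hij

end Arrow

theorem arrowP_of_cof_lt_covM_general (κ lam : Cardinal.{0}) (θ : Ordinal.{0}) (hκ : κ.IsRegular)
    (hle : κ ≤ lam) (hθ : θ < κ.ord) (hpow : ∀ μ < κ, ∀ i < θ, μ ^ i.card < κ) :
    ∀ H : IdealP κ lam, H.cof < covM κ κ → ArrowP κ lam H.mem (θ + 1) := by
  intro H hcof F A hA
  by_cases hsparse : ∃ P ⊆ A, P ∉ H.mem ∧ H.Sparse F P
  · obtain ⟨P, hPA, hP, hsparse⟩ := hsparse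
    obtain ⟨B, hBP, hB⟩ := hsparse.exists_homogeneous hκ hle hcof ⟨hPA.trans hA.1, hP⟩
    exact ⟨B, hBP.trans hPA, Or.inl hB⟩
  · have hchoices (P : Set (Set Ordinal.{0})) (hP : P ⊆ A) :=
      IdealP.exists_card_lt_diff_oneCone_mem (F := F) hκ hle hcof (hP.trans hA.1) fun C hC hF =>
        not_not.1 fun hCH => hsparse ⟨C, hC.trans hP, hCH, hF⟩
    choose! R hRP hcard hrem using hchoices
    obtain ⟨b, hb, hbR⟩ := IdealP.exists_mem_forall_treeLevel hκ hθ hpow hA.2 hcard hrem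
    obtain ⟨c, hc⟩ := exists_branch hb hbR
    obtain ⟨B, hBA, hB⟩ := exists_ordTypePrec_add_one_of_branch hb hRP hc
    exact ⟨B, hBA, Or.inr hB⟩

/-- Suppose `θ` is an infinite cardinal `< κ` with `κ → (κ, θ)²`. Then
`H⁺ →_κ (H⁺, θ+1)²` for every ideal `H` on `P_κ(λ)` with `cof(H) < cov(M_{κ,κ})`. -/
theorem arrowP_of_cof_lt_covM (κ lam θ : Cardinal.{0}) (hreg : κ.IsRegular) (huc : ℵ₀ < κ)
    (hlt : κ < lam) (hθ : ℵ₀ ≤ θ) (hθκ : θ < κ) (harrow : ArrowKTheta κ θ.ord) :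
    ∀ H : IdealP κ lam, H.cof < covM κ κ → ArrowP κ lam H.mem (θ.ord + 1) :=
  arrowP_of_cof_lt_covM_general κ lam θ.ord hreg hlt.le (ord_lt_ord.2 hθκ)
    fun _ hμ _ hi => power_lt_of_arrowKTheta hreg hθ hθκ harrow hμ hi

end PaperFormal
end
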